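/- arXiv:1607.04166 — 3 statements merged into one kernel-verified Lean document; each statement's English description precedes it below -/
import Mathlib

section
/- For every real λ > 0 and every β with 0 < β < 1, the improper integral ∫₀^∞ (ρ^{1/β} + λ)^{-1} dρ converges and λ^β = (λ sin(βπ)/(βπ)) · ∫₀^∞ (ρ^{1/β} + λ)^{-1} dρ. -/
open MeasureTheory Real

/-!
The substitution `ρ = t ^ β` turns the integral into `β ∫₀^∞ t ^ (β - 1) (t + lam)⁻¹ dt`. This is
the case `a = β`, `b = 1 - β` of
`∫₀^∞ t ^ (a - 1) (t + c) ^ (-(a + b)) dt = c ^ (-b) B(a, b)`,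
which the substitution `x = t / (t + c)` reduces to Euler's integral for the beta function. Euler's
reflection formula evaluates `B(β, 1 - β) = Γ(β) Γ(1 - β)` as `π / sin (π β)`.
-/

section BetaIntegral

variable {a b : ℝ}

lemma ofReal_rpow_mul_one_sub_rpow {x : ℝ} (hx : x ∈ Set.Icc (0 : ℝ) 1) (a b : ℝ) :
    ((x ^ (a - 1) * (1 - x) ^ (b - 1) : ℝ) : ℂ) =
      (x : ℂ) ^ ((a : ℂ) - 1) * (1 - (x : ℂ)) ^ ((b : ℂ) - 1) := by
  rw [Complex.ofReal_mul, Complex.ofReal_cpow hx.1, Complex.ofReal_cpow (sub_nonneg.2 hx.2)]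
  push_cast
  rfl

lemma integrableOn_Ioo_rpow_mul_one_sub_rpow (ha : 0 < a) (hb : 0 < b) :
    IntegrableOn (fun x : ℝ ↦ x ^ (a - 1) * (1 - x) ^ (b - 1)) (Set.Ioo 0 1) := by
  have complex_integrable : IntegrableOn
      (fun x : ℝ ↦ (x : ℂ) ^ ((a : ℂ) - 1) * (1 - (x : ℂ)) ^ ((b : ℂ) - 1)) (Set.Ioo 0 1) :=
    (intervalIntegrable_iff_integrableOn_Ioo_of_le zero_le_one).1 <|
      Complex.betaIntegral_convergent (by simpa using ha) (by simpa using hb)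
  refine IntegrableOn.congr_fun complex_integrable.re (fun x hx ↦ ?_) measurableSet_Ioo
  rw [← ofReal_rpow_mul_one_sub_rpow (Set.Ioo_subset_Icc_self hx)]
  exact Complex.ofReal_re _

lemma integral_Ioo_rpow_mul_one_sub_rpow (ha : 0 < a) (hb : 0 < b) :
    ∫ x in Set.Ioo (0 : ℝ) 1, x ^ (a - 1) * (1 - x) ^ (b - 1) = ProbabilityTheory.beta a b := by
  rw [ProbabilityTheory.beta_eq_betaIntegralReal a b ha hb, Complex.betaIntegral,
    intervalIntegral.integral_of_le zero_le_one, integral_Ioc_eq_integral_Ioo,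
    ← setIntegral_congr_fun measurableSet_Ioo fun x hx ↦
      ofReal_rpow_mul_one_sub_rpow (Set.Ioo_subset_Icc_self hx) a b,
    integral_complex_ofReal, Complex.ofReal_re]

lemma beta_one_sub (a : ℝ) : ProbabilityTheory.beta a (1 - a) = π / sin (π * a) := by
  rw [ProbabilityTheory.beta, Gamma_mul_Gamma_one_sub, add_sub_cancel, Gamma_one, div_one]

end BetaIntegral

section DivAddConst

variable {a b c t : ℝ}

lemma one_sub_div_add_const (h : t + c ≠ 0) : 1 - t / (t + c) = c / (t + c) := by
  rw [one_sub_div h, add_sub_cancel_left]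

lemma hasDerivAt_div_add_const (h : t + c ≠ 0) :
    HasDerivAt (fun t ↦ t / (t + c)) (c / (t + c) ^ 2) t := by
  simpa using (hasDerivAt_id' t).fun_div ((hasDerivAt_id' t).add_const c) h

lemma strictMonoOn_div_add_const (hc : 0 < c) :
    StrictMonoOn (fun t ↦ t / (t + c)) (Set.Ioi 0) := by
  intro s (hs : 0 < s) t (ht : 0 < t) hst
  rw [div_lt_div_iff₀ (by positivity) (by positivity)]
  nlinarith

lemma image_div_add_const_Ioi (hc : 0 < c) :
    (fun t ↦ t / (t + c)) '' Set.Ioi 0 = Set.Ioo 0 1 := by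
  ext x
  constructor
  · rintro ⟨t, ht : 0 < t, rfl⟩
    exact ⟨by positivity, (div_lt_one (by positivity)).2 (lt_add_of_pos_right t hc)⟩
  · rintro ⟨hx0, hx1⟩
    have : 0 < 1 - x := sub_pos.2 hx1
    refine ⟨c * x / (1 - x), by simp only [Set.mem_Ioi]; positivity, ?_⟩
    field_simp
    ring

section ChangeOfVariables

variable {E : Type*} [NormedAddCommGroup E] [NormedSpace ℝ E]

lemma integrableOn_Ioo_iff_comp_div_add_const (g : ℝ → E) (hc : 0 < c) :
    IntegrableOn g (Set.Ioo 0 1) ↔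
      IntegrableOn (fun t ↦ (c / (t + c) ^ 2) • g (t / (t + c))) (Set.Ioi 0) := by
  rw [← image_div_add_const_Ioi hc]
  exact integrableOn_image_iff_integrableOn_deriv_smul_of_monotoneOn measurableSet_Ioi
    (fun t (ht : 0 < t) ↦ (hasDerivAt_div_add_const (by positivity)).hasDerivWithinAt)
    (strictMonoOn_div_add_const hc).monotoneOn g

lemma integral_Ioo_eq_integral_comp_div_add_const (g : ℝ → E) (hc : 0 < c) :
    ∫ x in Set.Ioo (0 : ℝ) 1, g x =
      ∫ t in Set.Ioi (0 : ℝ), (c / (t + c) ^ 2) • g (t / (t + c)) := by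
  rw [← image_div_add_const_Ioi hc]
  exact integral_image_eq_integral_deriv_smul_of_monotoneOn measurableSet_Ioi
    (fun t (ht : 0 < t) ↦ (hasDerivAt_div_add_const (by positivity)).hasDerivWithinAt)
    (strictMonoOn_div_add_const hc).monotoneOn g

end ChangeOfVariables

lemma deriv_mul_betaIntegrand_div_add_const (hc : 0 < c) (ht : 0 < t) (a b : ℝ) :
    c / (t + c) ^ 2 * ((t / (t + c)) ^ (a - 1) * (1 - t / (t + c)) ^ (b - 1)) =
      c ^ b * (t ^ (a - 1) * (t + c) ^ (-(a + b))) := by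
  have htc : 0 < t + c := by positivity
  have exponents : (t + c) ^ (-(a + b)) =
      ((t + c) ^ 2 * (t + c) ^ (a - 1) * (t + c) ^ (b - 1))⁻¹ := by
    rw [rpow_neg htc.le, ← rpow_natCast, ← rpow_add htc, ← rpow_add htc]
    congr 2
    push_cast
    ring
  rw [one_sub_div_add_const htc.ne', div_rpow ht.le htc.le, div_rpow hc.le htc.le, exponents,
    rpow_sub_one hc.ne' b]
  field_simp

lemma integrableOn_Ioi_rpow_mul_add_const_rpow (ha : 0 < a) (hb : 0 < b) (hc : 0 < c) :
    IntegrableOn (fun t ↦ t ^ (a - 1) * (t + c) ^ (-(a + b))) (Set.Ioi 0) := by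
  have substituted := (integrableOn_Ioo_iff_comp_div_add_const _ hc).1
    (integrableOn_Ioo_rpow_mul_one_sub_rpow ha hb)
  have scaled : IntegrableOn (fun t ↦ c ^ b * (t ^ (a - 1) * (t + c) ^ (-(a + b)))) (Set.Ioi 0) :=
    substituted.congr_fun (fun t ht ↦ deriv_mul_betaIntegrand_div_add_const hc ht a b)
      measurableSet_Ioi
  exact (integrable_const_mul_iff (rpow_pos_of_pos hc b).ne'.isUnit _).1 scaled

lemma integral_Ioi_rpow_mul_add_const_rpow (ha : 0 < a) (hb : 0 < b) (hc : 0 < c) :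
    ∫ t in Set.Ioi (0 : ℝ), t ^ (a - 1) * (t + c) ^ (-(a + b)) =
      c ^ (-b) * ProbabilityTheory.beta a b := by
  have scaled : ProbabilityTheory.beta a b =
      c ^ b * ∫ t in Set.Ioi (0 : ℝ), t ^ (a - 1) * (t + c) ^ (-(a + b)) := by
    rw [← integral_Ioo_rpow_mul_one_sub_rpow ha hb,
      integral_Ioo_eq_integral_comp_div_add_const _ hc, ← integral_const_mul]
    exact setIntegral_congr_fun measurableSet_Ioi
      fun t ht ↦ deriv_mul_betaIntegrand_div_add_const hc ht a b
  rw [scaled, rpow_neg hc.le, inv_mul_cancel_left₀ (rpow_pos_of_pos hc b).ne']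

end DivAddConst

section InvAddConst

variable {β c : ℝ}

lemma integrableOn_Ioi_rpow_mul_inv_add_const (hβ0 : 0 < β) (hβ1 : β < 1) (hc : 0 < c) :
    IntegrableOn (fun t ↦ t ^ (β - 1) * (t + c)⁻¹) (Set.Ioi 0) := by
  simpa only [add_sub_cancel, rpow_neg_one] using
    integrableOn_Ioi_rpow_mul_add_const_rpow hβ0 (sub_pos.2 hβ1) hc

lemma integral_Ioi_rpow_mul_inv_add_const (hβ0 : 0 < β) (hβ1 : β < 1) (hc : 0 < c) :
    ∫ t in Set.Ioi (0 : ℝ), t ^ (β - 1) * (t + c)⁻¹ = c ^ (β - 1) * (π / sin (π * β)) := by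
  simpa only [add_sub_cancel, rpow_neg_one, neg_sub, beta_one_sub] using
    integral_Ioi_rpow_mul_add_const_rpow hβ0 (sub_pos.2 hβ1) hc

end InvAddConst

section PowerSubstitution

variable {E : Type*} [NormedAddCommGroup E] [NormedSpace ℝ E] {p : ℝ}

lemma integrableOn_Ioi_comp_rpow_one_div_iff (g : ℝ → E) (hp : p ≠ 0) :
    IntegrableOn (fun x ↦ g (x ^ (1 / p))) (Set.Ioi 0) ↔
      IntegrableOn (fun t ↦ t ^ (p - 1) • g t) (Set.Ioi 0) := by
  rw [← integrableOn_Ioi_comp_rpow_iff' _ hp]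
  refine integrableOn_congr_fun (fun t (ht : 0 < t) ↦ ?_) measurableSet_Ioi
  simp only [← rpow_mul ht.le, mul_one_div_cancel hp, rpow_one]

lemma integral_Ioi_comp_rpow_one_div (g : ℝ → E) (hp : p ≠ 0) :
    ∫ x in Set.Ioi (0 : ℝ), g (x ^ (1 / p)) =
      |p| • ∫ t in Set.Ioi (0 : ℝ), t ^ (p - 1) • g t := by
  rw [← integral_comp_rpow_Ioi _ hp, ← integral_smul]
  refine setIntegral_congr_fun measurableSet_Ioi fun t (ht : 0 < t) ↦ ?_
  simp only [← rpow_mul ht.le, mul_one_div_cancel hp, rpow_one, mul_smul]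

end PowerSubstitution

/-- For every real `λ > 0` and every `β` with `0 < β < 1`, the improper
integral `∫₀^∞ (ρ^{1/β} + λ)⁻¹ dρ` converges and
`λ^β = (λ sin(βπ)/(βπ)) · ∫₀^∞ (ρ^{1/β} + λ)⁻¹ dρ`. -/
theorem stmt1 (lam β : ℝ) (hlam : 0 < lam) (hβ0 : 0 < β) (hβ1 : β < 1) :
    IntegrableOn (fun ρ : ℝ => (ρ ^ (1 / β) + lam)⁻¹) (Set.Ioi 0) ∧
    lam ^ β = (lam * Real.sin (β * Real.pi) / (β * Real.pi)) *
      ∫ ρ in Set.Ioi (0 : ℝ), (ρ ^ (1 / β) + lam)⁻¹ := by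
  have sin_pos : 0 < sin (β * π) :=
    sin_pos_of_pos_of_lt_pi (by positivity) (mul_lt_of_lt_one_left pi_pos hβ1)
  have integral_eq : ∫ ρ in Set.Ioi (0 : ℝ), (ρ ^ (1 / β) + lam)⁻¹ =
      β * (lam ^ (β - 1) * (π / sin (β * π))) := by
    rw [integral_Ioi_comp_rpow_one_div (fun t ↦ (t + lam)⁻¹) hβ0.ne', abs_of_pos hβ0, mul_comm β π]
    simp only [smul_eq_mul, integral_Ioi_rpow_mul_inv_add_const hβ0 hβ1 hlam]
  constructor
  · exact (integrableOn_Ioi_comp_rpow_one_div_iff (fun t ↦ (t + lam)⁻¹) hβ0.ne').2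
      (integrableOn_Ioi_rpow_mul_inv_add_const hβ0 hβ1 hlam)
  · rw [integral_eq, rpow_sub_one hlam.ne']
    field_simp
end

section
/- Let 0 < λ_min < λ_max, let κ = λ_max/λ_min, let γ = (√κ + 1)/(√κ − 1), and let p_τ(λ) = (τ + λ)/(τ - λ). Then τ_opt = √(λ_min λ_max) satisfies: for every τ with λ_min < τ < λ_max, inf { |p_τ(λ)| : λ ∈ [λ_min, λ_max], λ ≠ τ } ≤ γ, and inf { |p_{τ_opt}(λ)| : λ ∈ [λ_min, λ_max], λ ≠ τ_opt } = γ; that is, τ_opt = √(λ_min λ_max) maximizes τ ↦ inf_{λ ∈ [λ_min, λ_max]} |p_τ(λ)| over (λ_min, λ_max). -/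
/-!
For `τ, λ > 0` the value `|p_τ(λ)|` depends only on the ratio between `τ` and `λ`, and decreases as
this ratio moves away from `1`. With `m = λ_min` and `s = √κ` the interval is `[m, s² m]`, and its
geometric mean `s m` is within a factor `s` of each of its points, so for `τ = s m` we
have `|p_τ| ≥ (s + 1) / (s - 1) = γ`. Any `τ > 0` is at least a factor `s` away from one of the two
endpoints, and that endpoint gives `|p_τ| ≤ γ`; for `τ ≤ 0` even `|p_τ| ≤ 1`.
-/

section OrderedField

variable {K : Type*} [Field K] [LinearOrder K]

/-- The set of values `|p_τ(λ)| = |(τ + λ) / (τ - λ)|` for `λ` in `I`, whose infimum is to be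
maximized over `τ`. The pole `λ = τ` is left out, where division by zero would contribute the
value `0`. -/
def absRatioValues (I : Set K) (τ : K) : Set K :=
  {v | ∃ lam ∈ I, lam ≠ τ ∧ v = |(τ + lam) / (τ - lam)|}

variable [IsStrictOrderedRing K] {s x y m : K}

theorem abs_add_div_sub_comm (x y : K) : |(x + y) / (x - y)| = |(y + x) / (y - x)| := by
  rw [abs_div, abs_div, add_comm, abs_sub_comm]

theorem abs_add_div_sub_le_of_mul_le (hs : 1 < s) (hx : 0 < x) (hyx : s * y ≤ x) :
    |(x + y) / (x - y)| ≤ (s + 1) / (s - 1) := by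
  have hy : y < x := by nlinarith
  have cross_mul_le : |x + y| * (s - 1) ≤ (s + 1) * (x - y) := by
    rcases abs_cases (x + y) with ⟨h, -⟩ | ⟨h, -⟩ <;> rw [h] <;> nlinarith
  rwa [abs_div, abs_of_pos (sub_pos.2 hy), div_le_div_iff₀ (sub_pos.2 hy) (sub_pos.2 hs)]

theorem le_abs_add_div_sub_of_le_mul (hs : 1 < s) (hxy : x ≤ s * y) (hyx : y ≤ s * x)
    (hne : x ≠ y) : (s + 1) / (s - 1) ≤ |(x + y) / (x - y)| := by
  have cross_mul_le : (s + 1) * |x - y| ≤ (s - 1) * (x + y) := by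
    rcases abs_cases (x - y) with ⟨h, -⟩ | ⟨h, -⟩ <;> rw [h] <;> linarith
  rw [abs_div, div_le_div_iff₀ (sub_pos.2 hs) (abs_pos.2 (sub_ne_zero.2 hne)),
    mul_comm |x + y|]
  exact cross_mul_le.trans (mul_le_mul_of_nonneg_left (le_abs_self _) (sub_pos.2 hs).le)

theorem bddBelow_absRatioValues (I : Set K) (τ : K) : BddBelow (absRatioValues I τ) :=
  ⟨0, by rintro _ ⟨lam, -, -, rfl⟩; exact abs_nonneg _⟩

theorem exists_mem_absRatioValues_Icc_le (hm : 0 < m) (hs : 1 < s) (τ : K) :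
    ∃ v ∈ absRatioValues (Set.Icc m (s ^ 2 * m)) τ, v ≤ (s + 1) / (s - 1) := by
  have hm_lt : m < s * m := lt_mul_left hm hs
  have hm_le : m ≤ s ^ 2 * m := le_mul_of_one_le_left hm.le (one_le_pow₀ hs.le)
  rcases le_total (s * m) τ with hτ | hτ
  · have hmτ : m < τ := hm_lt.trans_le hτ
    exact ⟨_, ⟨m, Set.left_mem_Icc.2 hm_le, hmτ.ne, rfl⟩,
      abs_add_div_sub_le_of_mul_le hs (hm.trans hmτ) hτ⟩
  · have hτM : s * τ ≤ s ^ 2 * m := by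
      rw [sq, mul_assoc]
      exact mul_le_mul_of_nonneg_left hτ (zero_lt_one.trans hs).le
    have hτ_lt : τ < s ^ 2 * m := by nlinarith
    refine ⟨_, ⟨s ^ 2 * m, Set.right_mem_Icc.2 hm_le, hτ_lt.ne', rfl⟩, ?_⟩
    rw [abs_add_div_sub_comm]
    exact abs_add_div_sub_le_of_mul_le hs (hm.trans_le hm_le) hτM

theorem le_of_mem_absRatioValues_Icc_mul (hs : 1 < s) {v : K}
    (hv : v ∈ absRatioValues (Set.Icc m (s ^ 2 * m)) (s * m)) : (s + 1) / (s - 1) ≤ v := by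
  obtain ⟨lam, ⟨hm_le, hle_M⟩, hne, rfl⟩ := hv
  have hs0 : 0 < s := zero_lt_one.trans hs
  exact le_abs_add_div_sub_of_le_mul hs (mul_le_mul_of_nonneg_left hm_le hs0.le)
    (hle_M.trans_eq (by ring)) hne.symm

theorem isLeast_absRatioValues_Icc_mul (hm : 0 < m) (hs : 1 < s) :
    IsLeast (absRatioValues (Set.Icc m (s ^ 2 * m)) (s * m)) ((s + 1) / (s - 1)) := by
  obtain ⟨v, hv, hv_le⟩ := exists_mem_absRatioValues_Icc_le hm hs (s * m)
  have hv_eq : v = (s + 1) / (s - 1) := hv_le.antisymm (le_of_mem_absRatioValues_Icc_mul hs hv)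
  exact ⟨hv_eq ▸ hv, fun _ => le_of_mem_absRatioValues_Icc_mul hs⟩

end OrderedField

theorem stmt7_general (lmin lmax : ℝ) (h0 : 0 < lmin) (hlt : lmin < lmax) :
    (∀ τ : ℝ, sInf (absRatioValues (Set.Icc lmin lmax) τ) ≤
      (√(lmax / lmin) + 1) / (√(lmax / lmin) - 1)) ∧
    IsLeast (absRatioValues (Set.Icc lmin lmax) √(lmin * lmax))
      ((√(lmax / lmin) + 1) / (√(lmax / lmin) - 1)) := by
  have hκ : 1 < lmax / lmin := (one_lt_div h0).2 hlt
  obtain ⟨s, hs, rfl⟩ : ∃ s : ℝ, 1 < s ∧ lmax = s ^ 2 * lmin :=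
    ⟨√(lmax / lmin), Real.lt_sqrt_of_sq_lt (by simpa using hκ),
      by rw [Real.sq_sqrt (zero_lt_one.trans hκ).le, div_mul_cancel₀ _ h0.ne']⟩
  have hs0 : 0 < s := zero_lt_one.trans hs
  have sqrt_ratio : √(s ^ 2 * lmin / lmin) = s := by
    rw [mul_div_cancel_right₀ _ h0.ne', Real.sqrt_sq hs0.le]
  have sqrt_prod : √(lmin * (s ^ 2 * lmin)) = s * lmin := by
    rw [show lmin * (s ^ 2 * lmin) = (s * lmin) ^ 2 by ring, Real.sqrt_sq (mul_pos hs0 h0).le]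
  rw [sqrt_ratio, sqrt_prod]
  refine ⟨fun τ => ?_, isLeast_absRatioValues_Icc_mul h0 hs⟩
  obtain ⟨v, hv, hv_le⟩ := exists_mem_absRatioValues_Icc_le h0 hs τ
  exact csInf_le_of_le (bddBelow_absRatioValues _ _) hv hv_le

/-- For `0 < λ_min < λ_max`, `κ = λ_max/λ_min`, `γ = (√κ+1)/(√κ-1)` and
`p_τ(λ) = (τ+λ)/(τ-λ)`, the value `τ_opt = √(λ_min λ_max)` maximizes
`τ ↦ inf { |p_τ(λ)| : λ ∈ [λ_min, λ_max], λ ≠ τ }` over `(λ_min, λ_max)`: every such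
infimum is at most `γ`, and for `τ_opt` it equals `γ`. -/
theorem stmt7 (lmin lmax : ℝ) (h0 : 0 < lmin) (hlt : lmin < lmax) :
    (∀ τ : ℝ, lmin < τ → τ < lmax →
      sInf {v : ℝ | ∃ lam ∈ Set.Icc lmin lmax, lam ≠ τ ∧ v = |(τ + lam) / (τ - lam)|} ≤
        (Real.sqrt (lmax / lmin) + 1) / (Real.sqrt (lmax / lmin) - 1)) ∧
    sInf {v : ℝ | ∃ lam ∈ Set.Icc lmin lmax, lam ≠ Real.sqrt (lmin * lmax) ∧
        v = |(Real.sqrt (lmin * lmax) + lam) / (Real.sqrt (lmin * lmax) - lam)|} =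
      (Real.sqrt (lmax / lmin) + 1) / (Real.sqrt (lmax / lmin) - 1) := by
  obtain ⟨hle, hleast⟩ := stmt7_general lmin lmax h0 hlt
  exact ⟨fun τ _ _ => hle τ, hleast.csInf_eq⟩
end

section
/- Let 0 < λ_min < λ_max, κ = λ_max/λ_min, γ = (√κ + 1)/(√κ − 1), τ = √(λ_min λ_max), and p_τ(λ) = (τ + λ)/(τ - λ). Then p_τ(λ_min) = γ, p_τ(λ_max) = −γ, and |p_τ(λ)| ≥ γ for every λ ∈ [λ_min, λ_max] with λ ≠ τ; consequently the image { p_τ(λ) : λ ∈ [λ_min, λ_max], λ ≠ τ } is contained in (−∞, −γ] ∪ [γ, +∞). -/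
/-!
The value `p_τ(λ)` depends only on the ratio `τ / λ`, and exchanging `τ` and `λ` changes its sign.
As `λ_min : τ : λ_max` is the geometric progression `1 : √κ : κ`, this gives `γ` and `-γ` at the
two endpoints. Since `p_τ` increases on each side of its pole `τ`, its values are at least
`p_τ(λ_min) = γ` to the left of `τ` and at most `p_τ(λ_max) = -γ` to the right.
-/

/-- The function `p_τ(x) = (τ + x) / (τ - x)`, a scaled Cayley transform with its pole at `x = τ`,
where division by zero gives it the value `0`. -/
def cayleyTransform {K : Type*} [Field K] (τ x : K) : K :=
  (τ + x) / (τ - x)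

namespace cayleyTransform

section Field

variable {K : Type*} [Field K]

theorem mul_mul_left {c : K} (hc : c ≠ 0) (τ x : K) :
    cayleyTransform (c * τ) (c * x) = cayleyTransform τ x := by
  simp only [cayleyTransform, ← mul_add, ← mul_sub, mul_div_mul_left _ _ hc]

theorem swap (τ x : K) : cayleyTransform x τ = -cayleyTransform τ x := by
  rw [cayleyTransform, cayleyTransform, ← div_neg, neg_sub, add_comm]

theorem div_left_one {x : K} (hx : x ≠ 0) (τ : K) :
    cayleyTransform (τ / x) 1 = cayleyTransform τ x := by
  rw [← mul_mul_left hx, mul_div_cancel₀ _ hx, mul_one]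

theorem sub_eq_div {τ x y : K} (hx : τ - x ≠ 0) (hy : τ - y ≠ 0) :
    cayleyTransform τ y - cayleyTransform τ x =
      2 * τ * (y - x) / ((τ - x) * (τ - y)) := by
  unfold cayleyTransform
  field_simp
  ring

end Field

section LinearOrderedField

variable {K : Type*} [Field K] [LinearOrder K] [IsStrictOrderedRing K] {τ : K}

theorem le_of_le_of_same_side {x y : K} (hτ : 0 ≤ τ) (hxy : x ≤ y) (hside : 0 < (τ - x) * (τ - y)) :
    cayleyTransform τ x ≤ cayleyTransform τ y := by
  rw [← sub_nonneg,
    sub_eq_div (left_ne_zero_of_mul hside.ne') (right_ne_zero_of_mul hside.ne')]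
  exact div_nonneg (mul_nonneg (mul_nonneg zero_le_two hτ) (sub_nonneg.mpr hxy)) hside.le

theorem monotoneOn_Iio (hτ : 0 ≤ τ) : MonotoneOn (cayleyTransform τ) (Set.Iio τ) :=
  fun _ hx _ hy hxy => le_of_le_of_same_side hτ hxy <|
    mul_pos (sub_pos.mpr hx) (sub_pos.mpr hy)

theorem monotoneOn_Ioi (hτ : 0 ≤ τ) : MonotoneOn (cayleyTransform τ) (Set.Ioi τ) :=
  fun _ hx _ hy hxy => le_of_le_of_same_side hτ hxy <|
    mul_pos_of_neg_of_neg (sub_neg.mpr hx) (sub_neg.mpr hy)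

theorem le_right_or_left_le {a b x : K} (hτ : 0 ≤ τ) (hx : x ∈ Set.Icc a b) (hne : x ≠ τ) :
    cayleyTransform τ x ≤ cayleyTransform τ b ∨ cayleyTransform τ a ≤ cayleyTransform τ x := by
  rcases hne.lt_or_gt with hlt | hgt
  · exact .inr (monotoneOn_Iio hτ (hx.1.trans_lt hlt) hlt hx.1)
  · exact .inl (monotoneOn_Ioi hτ hgt (hgt.trans_le hx.2) hx.2)

end LinearOrderedField

section Real

variable {a b : ℝ}

theorem sqrt_div_one (ha : 0 < a) (b : ℝ) :
    cayleyTransform √(b / a) 1 = cayleyTransform √b √a := by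
  rw [Real.sqrt_div' _ ha.le, div_left_one (Real.sqrt_pos.mpr ha).ne']

theorem sqrt_mul_left (ha : 0 < a) (b : ℝ) :
    cayleyTransform √(a * b) a = cayleyTransform √(b / a) 1 := by
  calc cayleyTransform √(a * b) a
      = cayleyTransform (√a * √b) (√a * √a) := by
        rw [Real.sqrt_mul ha.le, Real.mul_self_sqrt ha.le]
    _ = cayleyTransform √b √a := mul_mul_left (Real.sqrt_pos.mpr ha).ne' _ _
    _ = cayleyTransform √(b / a) 1 := (sqrt_div_one ha b).symm

theorem sqrt_mul_right (ha : 0 < a) (hb : 0 < b) :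
    cayleyTransform √(a * b) b = -cayleyTransform √(b / a) 1 := by
  calc cayleyTransform √(a * b) b
      = cayleyTransform √(a / b) 1 := by rw [mul_comm, sqrt_mul_left hb]
    _ = cayleyTransform √a √b := sqrt_div_one hb a
    _ = -cayleyTransform √b √a := swap _ _
    _ = -cayleyTransform √(b / a) 1 := by rw [sqrt_div_one ha]

end Real

end cayleyTransform

/-- For `0 < λ_min < λ_max`, `κ = λ_max/λ_min`, `γ = (√κ+1)/(√κ-1)`,
`τ = √(λ_min λ_max)` and `p_τ(λ) = (τ+λ)/(τ-λ)`: `p_τ(λ_min) = γ`, `p_τ(λ_max) = -γ`,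
`|p_τ(λ)| ≥ γ` on `[λ_min, λ_max] \ {τ}`, and hence the image of `p_τ` is contained in
`(-∞, -γ] ∪ [γ, ∞)`. -/
theorem stmt8 (lmin lmax : ℝ) (h0 : 0 < lmin) (hlt : lmin < lmax) :
    let τ := Real.sqrt (lmin * lmax)
    let γ := (Real.sqrt (lmax / lmin) + 1) / (Real.sqrt (lmax / lmin) - 1)
    (τ + lmin) / (τ - lmin) = γ ∧
    (τ + lmax) / (τ - lmax) = -γ ∧
    (∀ lam ∈ Set.Icc lmin lmax, lam ≠ τ → γ ≤ |(τ + lam) / (τ - lam)|) ∧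
    {v : ℝ | ∃ lam ∈ Set.Icc lmin lmax, lam ≠ τ ∧ v = (τ + lam) / (τ - lam)} ⊆
      Set.Iic (-γ) ∪ Set.Ici γ := by
  intro τ γ
  have hleft : cayleyTransform τ lmin = γ := cayleyTransform.sqrt_mul_left h0 lmax
  have hright : cayleyTransform τ lmax = -γ := cayleyTransform.sqrt_mul_right h0 (h0.trans hlt)
  have hrange : ∀ lam ∈ Set.Icc lmin lmax, lam ≠ τ →
      cayleyTransform τ lam ≤ -γ ∨ γ ≤ cayleyTransform τ lam := by
    intro lam hlam hne
    rw [← hright, ← hleft]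
    exact cayleyTransform.le_right_or_left_le (Real.sqrt_nonneg _) hlam hne
  refine ⟨hleft, hright, fun lam hlam hne => le_abs'.mpr (hrange lam hlam hne), ?_⟩
  rintro _ ⟨lam, hlam, hne, rfl⟩
  exact hrange lam hlam hne
end
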